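/- The function g(x) := h(exp(x)), where h(t) := (log Γ(t+1))/t, is strictly convex on ℝ. -/

import Mathlib

open Real

/-- `h x = log Γ(x+1) / x`. -/
noncomputable def hGamma (x : ℝ) : ℝ := Real.log (Real.Gamma (x + 1)) / x

/-!
Since `log Γ(1) = 0`, the number `h(t)` is the average of `ψ(s + 1)` over `s ∈ [0, t]`, where
`ψ = Γ'/Γ`. Substituting `s = r t`, `h(eˣ)` is the integral over `r ∈ [0, 1]` of `ψ(r eˣ + 1)`,
which is the translate by `log r` of `ψ(eˣ + 1)`. So it is enough that `x ↦ ψ(eˣ + 1)` is strictly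
convex, i.e. that `t ψ'(t + 1) = ∑ t / (t + k)²` (over `k ≥ 1`) is strictly increasing on `(0, ∞)`.
Its derivative `∑ (k - t) / (t + k)³` has terms of both signs, but they exceed those of the
telescoping series `∑ (b (k - 1) - b k)` with `b k = k / ((t + k) (t + k + 1))`, whose sum is
`b 0 = 0`.

The series for `ψ'` comes from `ψ(x + 1) = ψ(x) + 1 / x` and `ψ(x) - log x → 0`, the latter because
`log Γ` is convex.
-/

open Set Filter Topology MeasureTheory

lemma sub_lt_tsum_of_sub_succ_lt {a b : ℕ → ℝ} {l : ℝ} (ha : Summable a)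
    (hb : Tendsto b atTop (𝓝 l)) (h : ∀ n, b n - b (n + 1) < a n) :
    b 0 - l < ∑' n, a n := by
  have hmono : StrictMono fun N ↦ ∑ n ∈ Finset.range N, a n + b N :=
    strictMono_nat_of_lt_succ fun N ↦ by
      rw [Finset.sum_range_succ]
      linarith [h N]
  have hlim := ha.hasSum.tendsto_sum_nat.add hb
  have hlt : b 0 < ∑' n, a n + l := by
    simpa using (hmono zero_lt_one).trans_le (hmono.monotone.ge_of_tendsto hlim 1)
  exact sub_lt_iff_lt_add.2 hlt

lemma summable_one_div_add_natCast_sq (a : ℝ) : Summable fun n : ℕ ↦ 1 / (a + n) ^ 2 := by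
  simpa [add_comm] using (Real.summable_one_div_nat_add_rpow a 2).2 one_lt_two

lemma strictConvexOn_intervalIntegral {E : Type*} [AddCommMonoid E] [SMul ℝ E] {S : Set E}
    {F : ℝ → E → ℝ} {a b : ℝ} (hab : a < b)
    (hcont : ∀ x ∈ S, ContinuousOn (fun r ↦ F r x) (Icc a b))
    (hconv : ∀ r ∈ Ioc a b, StrictConvexOn ℝ S (F r)) :
    StrictConvexOn ℝ S fun x ↦ ∫ r in a..b, F r x := by
  have hb : b ∈ Ioc a b := right_mem_Ioc.2 hab
  have hS : Convex ℝ S := (hconv b hb).1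
  refine ⟨hS, fun x hx y hy hxy p q hp hq hpq ↦ ?_⟩
  have hint {z : E} (hz : z ∈ S) : IntervalIntegrable (fun r ↦ F r z) volume a b :=
    (hcont z hz).intervalIntegrable_of_Icc hab.le
  calc ∫ r in a..b, F r (p • x + q • y)
      < ∫ r in a..b, (p • F r x + q • F r y) :=
        intervalIntegral.integral_lt_integral_of_continuousOn_of_le_of_exists_lt hab
          (hcont _ (hS hx hy hp.le hq.le hpq))
          (((hcont x hx).const_smul p).add ((hcont y hy).const_smul q))
          (fun r hr ↦ ((hconv r hr).2 hx hy hxy hp hq hpq).le)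
          ⟨b, Ioc_subset_Icc_self hb, (hconv b hb).2 hx hy hxy hp hq hpq⟩
    _ = p • (∫ r in a..b, F r x) + q • ∫ r in a..b, F r y := by
        simp only [smul_eq_mul]
        rw [intervalIntegral.integral_add ((hint hx).const_mul p) ((hint hy).const_mul q),
          intervalIntegral.integral_const_mul, intervalIntegral.integral_const_mul]

lemma interval_average_zero_eq_integral_comp_mul {E : Type*} [NormedAddCommGroup E]
    [NormedSpace ℝ E] (f : ℝ → E) {c : ℝ} (hc : c ≠ 0) :
    ⨍ t in 0..c, f t = ∫ r in 0..1, f (r * c) := by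
  rw [interval_average_eq, intervalIntegral.integral_comp_mul_right f hc, sub_zero, zero_mul,
    one_mul]

lemma strictConvexOn_interval_average_exp {f : ℝ → ℝ} (hcont : ContinuousOn f (Ici 0))
    (hconv : StrictConvexOn ℝ univ fun u ↦ f (exp u)) :
    StrictConvexOn ℝ univ fun u ↦ ⨍ t in 0..exp u, f t := by
  simp_rw [fun u ↦ interval_average_zero_eq_integral_comp_mul f (exp_ne_zero u)]
  refine strictConvexOn_intervalIntegral zero_lt_one (fun u _ ↦ ?_) fun r hr ↦ ?_
  · exact hcont.comp (by fun_prop) fun r hr ↦ mul_nonneg hr.1 (exp_pos u).le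
  · simpa [Function.comp_def, exp_add, exp_log hr.1] using hconv.translate_right (log r)

/-- The digamma function `ψ = Γ'/Γ` of a real variable, the counterpart of `Complex.digamma`. -/
noncomputable def realDigamma : ℝ → ℝ := logDeriv Gamma

lemma hasDerivAt_log_Gamma {x : ℝ} (hx : ∀ m : ℕ, x ≠ -m) :
    HasDerivAt (fun y ↦ log (Gamma y)) (realDigamma x) x :=
  (differentiableAt_Gamma hx).hasDerivAt.log (Gamma_ne_zero hx)

lemma ne_neg_natCast_of_pos {x : ℝ} (hx : 0 < x) (m : ℕ) : x ≠ -m :=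
  ((neg_nonpos.2 m.cast_nonneg).trans_lt hx).ne'

lemma log_Gamma_add_one {x : ℝ} (hx : ∀ m : ℕ, x ≠ -m) :
    log (Gamma (x + 1)) = log x + log (Gamma x) := by
  have hx0 : x ≠ 0 := by simpa using hx 0
  rw [Gamma_add_one hx0, log_mul hx0 (Gamma_ne_zero hx)]

lemma realDigamma_add_one {x : ℝ} (hx : ∀ m : ℕ, x ≠ -m) :
    realDigamma (x + 1) = realDigamma x + 1 / x := by
  have hx0 : x ≠ 0 := by simpa using hx 0
  have hΓ : Gamma x ≠ 0 := Gamma_ne_zero hx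
  have hrec : (fun y ↦ Gamma (y + 1)) =ᶠ[𝓝 x] fun y ↦ y * Gamma y :=
    (eventually_ne_nhds hx0).mono fun _ ↦ Gamma_add_one
  have hderiv : deriv Gamma (x + 1) = Gamma x + x * deriv Gamma x := by
    rw [← deriv_comp_add_const, hrec.deriv_eq,
      deriv_fun_mul differentiableAt_fun_id (differentiableAt_Gamma hx), deriv_id'', one_mul]
  rw [realDigamma, logDeriv_apply, logDeriv_apply, hderiv, Gamma_add_one hx0]
  field_simp
  ring

lemma realDigamma_add_natCast {x : ℝ} (hx : ∀ m : ℕ, x ≠ -m) (N : ℕ) :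
    realDigamma (x + N) = realDigamma x + ∑ n ∈ Finset.range N, 1 / (x + n) := by
  induction N with
  | zero => simp
  | succ N ih =>
    have hxN (m : ℕ) : x + N ≠ -m := fun h ↦ hx (N + m) (by push_cast; linarith)
    rw [Nat.cast_succ, ← add_assoc, realDigamma_add_one hxN, ih, Finset.sum_range_succ, add_assoc]

lemma realDigamma_le_log {x : ℝ} (hx : 0 < x) : realDigamma x ≤ log x := by
  have hslope := convexOn_log_Gamma.le_slope_of_hasDerivAt hx (mem_Ioi.2 (by positivity))
    (lt_add_one x) (hasDerivAt_log_Gamma (ne_neg_natCast_of_pos hx))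
  simpa [slope_def_field, log_Gamma_add_one (ne_neg_natCast_of_pos hx)] using hslope

lemma log_sub_one_div_le_realDigamma {x : ℝ} (hx : 0 < x) : log x - 1 / x ≤ realDigamma x := by
  have hslope := convexOn_log_Gamma.slope_le_of_hasDerivAt hx (mem_Ioi.2 (by positivity))
    (lt_add_one x) (hasDerivAt_log_Gamma (ne_neg_natCast_of_pos (by positivity)))
  rw [realDigamma_add_one (ne_neg_natCast_of_pos hx)] at hslope
  simpa [slope_def_field, log_Gamma_add_one (ne_neg_natCast_of_pos hx)] using hslope

lemma tendsto_realDigamma_sub_log : Tendsto (fun x ↦ realDigamma x - log x) atTop (𝓝 0) := by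
  have hinv : Tendsto (fun x : ℝ ↦ -(1 / x)) atTop (𝓝 0) := by
    simpa using tendsto_inv_atTop_zero (𝕜 := ℝ) |>.neg
  refine tendsto_of_tendsto_of_tendsto_of_le_of_le' hinv tendsto_const_nhds ?_ ?_
  · filter_upwards [eventually_gt_atTop 0] with x hx
    linarith [log_sub_one_div_le_realDigamma hx]
  · filter_upwards [eventually_gt_atTop 0] with x hx
    exact sub_nonpos.2 (realDigamma_le_log hx)

lemma tendsto_log_add_natCast_sub_log (x : ℝ) :
    Tendsto (fun n : ℕ ↦ log (x + n) - log n) atTop (𝓝 0) := by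
  simpa [Function.comp_def, add_comm] using
    (tendsto_log_comp_add_sub_log x).comp tendsto_natCast_atTop_atTop

lemma tendsto_realDigamma_add_natCast_sub_log (x : ℝ) :
    Tendsto (fun n : ℕ ↦ realDigamma (x + n) - log n) atTop (𝓝 0) := by
  have hψ := tendsto_realDigamma_sub_log.comp
    (tendsto_atTop_add_const_left _ x tendsto_natCast_atTop_atTop)
  simpa [Function.comp_def] using hψ.add (tendsto_log_add_natCast_sub_log x)

lemma hasSum_realDigamma_sub {x y : ℝ} (hx : 0 < x) (hy : 0 < y) :
    HasSum (fun n : ℕ ↦ 1 / (y + n) - 1 / (x + n)) (realDigamma x - realDigamma y) := by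
  wlog hyx : y ≤ x generalizing x y
  · simpa using (this hy hx (le_of_not_ge hyx)).neg
  have hnonneg (n : ℕ) : 0 ≤ 1 / (y + n) - 1 / (x + n) := sub_nonneg.2 (by gcongr)
  refine (hasSum_iff_tendsto_nat_of_nonneg hnonneg _).2 ?_
  have hlim := ((tendsto_realDigamma_add_natCast_sub_log y).sub
    (tendsto_realDigamma_add_natCast_sub_log x)).const_add (realDigamma x - realDigamma y)
  rw [sub_zero, add_zero] at hlim
  refine hlim.congr fun N ↦ ?_
  rw [realDigamma_add_natCast (ne_neg_natCast_of_pos hx),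
    realDigamma_add_natCast (ne_neg_natCast_of_pos hy), Finset.sum_sub_distrib]
  ring

lemma hasDerivAt_realDigamma {x : ℝ} (hx : 0 < x) :
    HasDerivAt realDigamma (∑' n : ℕ, 1 / (x + n) ^ 2) x := by
  have hterm (n : ℕ) (y : ℝ) (hy : y ∈ Ioi (x / 2)) :
      HasDerivAt (fun z : ℝ ↦ 1 / (x + n) - 1 / (z + n)) (1 / (y + n) ^ 2) y := by
    have hy0 : 0 < y := (half_pos hx).trans hy
    have hyn : y + n ≠ 0 := by positivity
    simpa [neg_div] using (((hasDerivAt_id y).add_const (n : ℝ)).inv hyn).const_sub (x + n)⁻¹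
  have hbound (n : ℕ) (y : ℝ) (hy : y ∈ Ioi (x / 2)) :
      ‖1 / (y + n) ^ 2‖ ≤ 1 / (x / 2 + n) ^ 2 := by
    rw [norm_of_nonneg (by positivity)]
    have hxy : x / 2 ≤ y := le_of_lt hy
    gcongr
  have hx_mem : x ∈ Ioi (x / 2) := half_lt_self hx
  have hseries := hasDerivAt_tsum_of_isPreconnected (summable_one_div_add_natCast_sq (x / 2))
    isOpen_Ioi isPreconnected_Ioi hterm hbound hx_mem (hasSum_realDigamma_sub hx hx).summable hx_mem
  refine (hseries.const_add (realDigamma x)).congr_of_eventuallyEq ?_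
  filter_upwards [eventually_gt_nhds hx] with y hy
  rw [(hasSum_realDigamma_sub hy hx).tsum_eq, add_sub_cancel]

lemma continuousOn_realDigamma : ContinuousOn realDigamma (Ioi 0) :=
  fun _ hx ↦ (hasDerivAt_realDigamma hx).continuousAt.continuousWithinAt

lemma continuousOn_realDigamma_add_one : ContinuousOn (fun t ↦ realDigamma (t + 1)) (Ioi (-1)) :=
  continuousOn_realDigamma.comp (by fun_prop) fun _ ht ↦
    mem_Ioi.2 (neg_lt_iff_pos_add.1 ht)

lemma abs_sub_div_add_cube_le {s t : ℝ} (hs : 0 ≤ s) (ht : 0 ≤ t) :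
    |(s - t) / (t + s) ^ 3| ≤ 1 / (t + s) ^ 2 := by
  rcases (add_nonneg ht hs).eq_or_lt with h0 | hpos
  · simp [← h0]
  rw [abs_div, abs_of_pos (pow_pos hpos 3), div_le_div_iff₀ (by positivity) (by positivity)]
  have habs : |s - t| ≤ t + s := abs_le.2 ⟨by linarith, by linarith⟩
  nlinarith [pow_pos hpos 2]

lemma abs_natCast_add_one_sub_div_cube_le {t : ℝ} (ht : 0 ≤ t) (n : ℕ) :
    |(n + 1 - t) / (t + (n + 1)) ^ 3| ≤ 1 / (1 + n : ℝ) ^ 2 := by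
  have hle : (1 + n : ℝ) ≤ t + (n + 1) := by linarith
  exact (abs_sub_div_add_cube_le (by positivity) ht).trans (by gcongr)

lemma div_sub_div_lt_sub_div_add_cube {s t : ℝ} (hs : 0 ≤ s) (ht : 0 < t) :
    s / ((t + s) * (t + s + 1)) - (s + 1) / ((t + (s + 1)) * (t + (s + 1) + 1))
      < (s + 1 - t) / (t + (s + 1)) ^ 3 := by
  have hdiff : (s + 1 - t) / (t + (s + 1)) ^ 3
      - (s / ((t + s) * (t + s + 1)) - (s + 1) / ((t + (s + 1)) * (t + (s + 1) + 1)))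
      = (t ^ 2 + (2 * s + 3) * t + s * (s + 1))
        / ((t + s) * (t + (s + 1)) ^ 3 * (t + (s + 2))) := by
    field_simp
    ring
  rw [← sub_pos, hdiff]
  positivity

lemma tsum_sub_div_add_cube_pos {t : ℝ} (ht : 0 < t) :
    0 < ∑' n : ℕ, (n + 1 - t) / (t + (n + 1)) ^ 3 := by
  have hsummable : Summable fun n : ℕ ↦ (n + 1 - t) / (t + (n + 1)) ^ 3 :=
    .of_norm_bounded (summable_one_div_add_natCast_sq 1)
      (abs_natCast_add_one_sub_div_cube_le ht.le)
  have hlim : Tendsto (fun n : ℕ ↦ n / ((t + n) * (t + n + 1))) atTop (𝓝 0) := by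
    refine squeeze_zero (fun n ↦ by positivity) (fun n ↦ ?_)
      (tendsto_one_div_add_atTop_nhds_zero_nat (𝕜 := ℝ))
    rw [div_le_div_iff₀ (by positivity) (by positivity)]
    nlinarith [mul_nonneg ht.le n.cast_nonneg]
  simpa using sub_lt_tsum_of_sub_succ_lt hsummable hlim fun n ↦ by
    simpa using div_sub_div_lt_sub_div_add_cube n.cast_nonneg ht

lemma hasDerivAt_mul_tsum_one_div_add_sq {t : ℝ} (ht : 0 < t) :
    HasDerivAt (fun s : ℝ ↦ s * ∑' n : ℕ, 1 / (s + 1 + n) ^ 2)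
      (∑' n : ℕ, (n + 1 - t) / (t + (n + 1)) ^ 3) t := by
  have hterm (n : ℕ) (s : ℝ) (hs : s ∈ Ioi (0 : ℝ)) :
      HasDerivAt (fun r : ℝ ↦ r * (1 / (r + 1 + n) ^ 2)) ((n + 1 - s) / (s + (n + 1)) ^ 3) s := by
    have hs0 : 0 < s := hs
    have hden : HasDerivAt (fun r : ℝ ↦ (r + 1 + n) ^ 2) (2 * (s + 1 + n)) s := by
      simpa using (((hasDerivAt_id s).add_const 1).add_const (n : ℝ)).fun_pow 2
    simp only [mul_one_div]
    refine ((hasDerivAt_id' s).fun_div hden (by positivity)).congr_deriv ?_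
    field_simp
    ring
  have hsummable : Summable fun n : ℕ ↦ t * (1 / (t + 1 + n) ^ 2) :=
    (summable_one_div_add_natCast_sq (t + 1)).mul_left t
  simpa only [tsum_mul_left] using
    hasDerivAt_tsum_of_isPreconnected (summable_one_div_add_natCast_sq 1) isOpen_Ioi
      isPreconnected_Ioi hterm
      (fun n s hs ↦ abs_natCast_add_one_sub_div_cube_le (le_of_lt hs) n) ht hsummable ht

lemma strictMonoOn_mul_tsum_one_div_add_sq :
    StrictMonoOn (fun t : ℝ ↦ t * ∑' n : ℕ, 1 / (t + 1 + n) ^ 2) (Ioi 0) := by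
  refine strictMonoOn_of_deriv_pos (convex_Ioi 0) (fun t ht ↦ ?_) fun t ht ↦ ?_
  · exact (hasDerivAt_mul_tsum_one_div_add_sq ht).continuousAt.continuousWithinAt
  · rw [interior_Ioi] at ht
    rw [(hasDerivAt_mul_tsum_one_div_add_sq ht).deriv]
    exact tsum_sub_div_add_cube_pos ht

lemma strictConvexOn_realDigamma_exp_add_one :
    StrictConvexOn ℝ univ fun u ↦ realDigamma (exp u + 1) := by
  have hderiv (u : ℝ) : HasDerivAt (fun v ↦ realDigamma (exp v + 1))
      (exp u * ∑' n : ℕ, 1 / (exp u + 1 + n) ^ 2) u := by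
    rw [mul_comm]
    exact (hasDerivAt_realDigamma (by positivity)).comp u ((hasDerivAt_exp u).add_const 1)
  refine StrictMono.strictConvexOn_univ_of_deriv
    (continuous_iff_continuousAt.2 fun u ↦ (hderiv u).continuousAt) fun u v huv ↦ ?_
  rw [(hderiv u).deriv, (hderiv v).deriv]
  exact strictMonoOn_mul_tsum_one_div_add_sq (exp_pos u) (exp_pos v) (exp_lt_exp.2 huv)

lemma hGamma_eq_interval_average {x : ℝ} (hx : -1 < x) :
    hGamma x = ⨍ t in 0..x, realDigamma (t + 1) := by
  have hsub : uIcc 0 x ⊆ Ioi (-1) := ordConnected_Ioi.uIcc_subset neg_one_lt_zero hx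
  have hderiv (t : ℝ) (ht : t ∈ uIcc 0 x) :
      HasDerivAt (fun s ↦ log (Gamma (s + 1))) (realDigamma (t + 1)) t :=
    (hasDerivAt_log_Gamma <| ne_neg_natCast_of_pos <|
      neg_lt_iff_pos_add.1 (hsub ht)).comp_add_const t 1
  rw [interval_average_eq_div, intervalIntegral.integral_eq_sub_of_hasDerivAt hderiv
    (continuousOn_realDigamma_add_one.mono hsub).intervalIntegrable]
  simp [hGamma]

/-- The function `g(x) = h(exp x)`, where `h(t) = log Γ(t+1) / t`, is strictly convex on `ℝ`. -/
theorem strictConvexOn_hGamma_exp :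
    StrictConvexOn ℝ Set.univ (fun x : ℝ => hGamma (Real.exp x)) := by
  have haverage : StrictConvexOn ℝ univ fun x ↦ ⨍ t in 0..exp x, realDigamma (t + 1) :=
    strictConvexOn_interval_average_exp
      (continuousOn_realDigamma_add_one.mono (Ici_subset_Ioi.2 neg_one_lt_zero))
      strictConvexOn_realDigamma_exp_add_one
  exact haverage.congr fun x _ ↦
    (hGamma_eq_interval_average (neg_one_lt_zero.trans (exp_pos x))).symm
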